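/- The inducibility of the directed path on four vertices in the family of T⃗₃-free oriented graphs equals 24/125; that is, the limit as n → ∞ of the maximum, over all T⃗₃-free oriented graphs G on n vertices, of the density of induced copies of P⃗₄ in G, exists and equals 24/125. -/

import Mathlib

open scoped Classical

/-- An oriented graph: the arc relation has no loops and no 2-cycles. -/
def IsOriented {V : Type*} (A : V → V → Prop) : Prop :=
  ∀ a b : V, A a b → ¬ A b a

/-- `T⃗₃`-freeness: no three vertices span the arcs a→b, b→c, a→c. -/
def T3Free {V : Type*} (A : V → V → Prop) : Prop :=
  ∀ a b c : V, ¬ (A a b ∧ A b c ∧ A a c)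

/-- `S` is the vertex set of an induced copy of the directed path `P⃗ₖ` in the
oriented graph with arc relation `A`. -/
def IsInducedPath {V : Type*} (A : V → V → Prop) (k : ℕ) (S : Finset V) : Prop :=
  ∃ f : Fin k → V, Function.Injective f ∧ (∀ v : V, v ∈ S ↔ ∃ i, f i = v) ∧
    ∀ i j : Fin k, A (f i) (f j) ↔ (j : ℕ) = (i : ℕ) + 1

/-- The number of induced copies of `P⃗ₖ`. -/
noncomputable def numPaths {V : Type*} [Fintype V] [DecidableEq V]
    (A : V → V → Prop) (k : ℕ) : ℕ :=
  (Finset.univ.filter fun S : Finset V => IsInducedPath A k S).card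

/-- The number of induced copies of `P⃗ₖ` containing all vertices of `T`. -/
noncomputable def numPathsThrough {V : Type*} [Fintype V] [DecidableEq V]
    (A : V → V → Prop) (k : ℕ) (T : Finset V) : ℕ :=
  (Finset.univ.filter fun S : Finset V => IsInducedPath A k S ∧ T ⊆ S).card

/-- The density of induced copies of `P⃗ₖ`. -/
noncomputable def pathDensity {V : Type*} [Fintype V] [DecidableEq V]
    (A : V → V → Prop) (k : ℕ) : ℝ :=
  (numPaths A k : ℝ) / ((Fintype.card V).choose k : ℝ)

/-- The maximum density of induced copies of `P⃗ₖ` over all `T⃗₃`-free oriented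
graphs on `n` vertices. -/
noncomputable def maxDensityT3 (k n : ℕ) : ℝ :=
  sSup {d : ℝ | ∃ A : Fin n → Fin n → Prop, IsOriented A ∧ T3Free A ∧ d = pathDensity A k}

/-- The maximum density of induced copies of `P⃗ₖ` over all oriented graphs on `n`
vertices. -/
noncomputable def maxDensityAll (k n : ℕ) : ℝ :=
  sSup {d : ℝ | ∃ A : Fin n → Fin n → Prop, IsOriented A ∧ d = pathDensity A k}

/-- `S` is the vertex set of an induced copy of the oriented graph `H` in the
oriented graph with arc relation `A`. -/
def IsInducedCopy {V W : Type*} (H : W → W → Prop) (A : V → V → Prop) (S : Finset V) : Prop :=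
  ∃ f : W → V, Function.Injective f ∧ (∀ v : V, v ∈ S ↔ ∃ w, f w = v) ∧
    ∀ a b : W, A (f a) (f b) ↔ H a b

/-- The number of induced copies of `H` in `A`. -/
noncomputable def numCopies {V W : Type*} [Fintype V] [DecidableEq V]
    (H : W → W → Prop) (A : V → V → Prop) : ℕ :=
  (Finset.univ.filter fun S : Finset V => IsInducedCopy H A S).card

/-- The number of (unordered) pairs of vertices on which the two oriented graphs `A`
and `B` differ (an arc must be added, removed, or reoriented). -/
noncomputable def pairDiff {V : Type*} [Fintype V] [LinearOrder V]
    (A B : V → V → Prop) : ℕ :=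
  (Finset.univ.filter fun p : V × V => p.1 < p.2 ∧
    ¬ ((A p.1 p.2 ↔ B p.1 p.2) ∧ (A p.2 p.1 ↔ B p.2 p.1))).card

/-- `A` is a blow-up of the directed 5-cycle with parts given by the fibers of `g`. -/
def IsBlowupC5 {V : Type*} (A : V → V → Prop) (g : V → Fin 5) : Prop :=
  ∀ u v : V, A u v ↔ g v = g u + 1

/-- The size of the part of vertices mapped to `i`. -/
noncomputable def partSize {V : Type*} [Fintype V] {m : ℕ} (g : V → Fin m) (i : Fin m) : ℕ :=
  (Finset.univ.filter fun v : V => g v = i).card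

/-- `A` is a balanced blow-up of the directed 5-cycle, i.e. isomorphic to `C⃗₅(n)`. -/
def IsBalancedBlowupC5 {V : Type*} [Fintype V] (A : V → V → Prop) : Prop :=
  ∃ g : V → Fin 5, IsBlowupC5 A g ∧
    ∀ i j : Fin 5, (partSize g i : ℤ) - (partSize g j : ℤ) ≤ 1

/-!
Both bounds come from the balanced blow-up of the directed 5-cycle. Its induced copies of `P⃗₄` are
the choices of four consecutive parts and of a vertex in each, so there are at least
`5 ⌊n / 5⌋ ^ 4` of them.

The upper bound `n ^ 4 / 125` for the number of induced copies of `P⃗₄` is a flag algebra argument.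
Sum over all ordered 5-tuples of vertices the indicator that the first four form an induced `P⃗₄`,
plus a combination of products `f (x₁, x₂, x₃) * f (x₁, x₄, x₅)` and `h (x₄) * h (x₅)`, where `h`
depends on an induced `P⃗₃` on `x₁, x₂, x₃`. Summing over the unshared vertices turns these products
into squares, so the total is at least `n` times the number of induced copies of `P⃗₄`. On the other
hand, averaging over the `5!` orders of each tuple bounds the total from above by a computation on
the `T⃗₃`-free oriented graphs on five vertices. On the balanced blow-up the functions `f` and `h`
sum to zero, as they must for the bound to be tight.
-/

section Comap

variable {ι V : Type*} {A : V → V → Prop}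

theorem IsOriented.comap (hA : IsOriented A) (x : ι → V) : IsOriented fun i j => A (x i) (x j) :=
  fun _ _ => hA _ _

theorem T3Free.comap (hT : T3Free A) (x : ι → V) : T3Free fun i j => A (x i) (x j) :=
  fun _ _ _ => hT _ _ _

end Comap

namespace PathInducibility

section Averaging

variable {M : Type*} [AddCommMonoid M]

theorem sum_perm_ofFn {n : ℕ} (f : List (Fin n) → M) :
    ∑ σ : Equiv.Perm (Fin n), f (List.ofFn σ) =
      ((List.finRange n).permutations'.map f).sum := by
  have h_nodup : (List.finRange n).permutations'.Nodup :=
    (List.permutations_perm_permutations' _).nodup_iff.1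
      (List.nodup_permutations _ (List.nodup_finRange n))
  rw [← List.sum_toFinset f h_nodup]
  refine Finset.sum_bij (fun σ _ => List.ofFn σ) (fun σ _ => ?_) (fun σ _ τ _ h => ?_)
    (fun l hl => ?_) fun _ _ => rfl
  · rw [List.mem_toFinset, List.mem_permutations', List.ofFn_eq_map]
    exact Equiv.Perm.map_finRange_perm σ
  · exact DFunLike.coe_injective (List.ofFn_injective h)
  · rw [List.mem_toFinset, List.mem_permutations'] at hl
    have h_length : l.length = n := by simpa using hl.length_eq
    obtain ⟨x, rfl⟩ : ∃ x : Fin n → Fin n, List.ofFn x = l :=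
      ⟨fun i => l[i], List.ext_getElem (by simp [h_length]) (by simp)⟩
    have hx : Function.Injective x := List.nodup_ofFn.1 (hl.symm.nodup (List.nodup_finRange n))
    exact ⟨Equiv.ofBijective x (Finite.injective_iff_bijective.1 hx), Finset.mem_univ _, rfl⟩

theorem sum_tuple_succ {V : Type*} [Fintype V] {n : ℕ} (f : (Fin (n + 1) → V) → M) :
    ∑ x, f x = ∑ a, ∑ x : Fin n → V, f (Fin.cons a x) := by
  rw [← (Fin.consEquiv fun _ => V).sum_comp, Fintype.sum_prod_type]
  rfl

theorem factorial_nsmul_sum_le [PartialOrder M] [IsOrderedAddMonoid M]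
    {ι V : Type*} [Fintype ι] [DecidableEq ι] [Fintype V] (f : (ι → V) → M) (c : M)
    (h : ∀ x, ∑ σ : Equiv.Perm ι, f (x ∘ σ) ≤ c) :
    (Fintype.card ι).factorial • ∑ x, f x ≤ Fintype.card V ^ Fintype.card ι • c := by
  have h_reindex (σ : Equiv.Perm ι) : ∑ x, f (x ∘ σ) = ∑ x, f x :=
    (Equiv.arrowCongr σ.symm (Equiv.refl V)).sum_comp f
  calc (Fintype.card ι).factorial • ∑ x, f x
      = ∑ σ : Equiv.Perm ι, ∑ x, f (x ∘ σ) := by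
        simp only [h_reindex, Finset.sum_const, Finset.card_univ, Fintype.card_perm]
    _ = ∑ x, ∑ σ : Equiv.Perm ι, f (x ∘ σ) := Finset.sum_comm
    _ ≤ ∑ _x : ι → V, c := Finset.sum_le_sum fun x _ => h x
    _ = Fintype.card V ^ Fintype.card ι • c := by
        simp only [Finset.sum_const, Finset.card_univ, Fintype.card_fun]

end Averaging

section LocalWeight

variable {ι : Type*}

/-- The isomorphism types of oriented graphs on a root `a` and two unordered vertices `b`, `c`:
`empty` has no arc, `far` a single arc, avoiding the root, `out` and `inn` a single arc, leaving or
entering the root. In the order of the constructors, the next seven are `a → b ← c`, `a ← b → c`,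
`b ← a → c`, `b → a ← c`, `a → b → c`, `a ← b ← c`, `b → a → c`. All triangles are `other`. -/
inductive RootedTriple
  | empty | far | out | inn | outSink | inSource | outOut | inIn | outPath | inPath | through
  | other

open SignType in
/-- The type of the triple `a`, `b`, `c` with root `a` in the graph with arc signs `M`. -/
def rootedTriple (M : ι → ι → SignType) (a b c : ι) : RootedTriple :=
  match M a b, M a c, M b c with
  | zero, zero, zero => .empty
  | zero, zero, _ => .far
  | pos, zero, zero | zero, pos, zero => .out
  | neg, zero, zero | zero, neg, zero => .inn
  | pos, zero, neg | zero, pos, pos => .outSink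
  | neg, zero, pos | zero, neg, neg => .inSource
  | pos, zero, pos | zero, pos, neg => .outPath
  | neg, zero, neg | zero, neg, pos => .inPath
  | pos, pos, zero => .outOut
  | neg, neg, zero => .inIn
  | pos, neg, zero | neg, pos, zero => .through
  | _, _, _ => .other

/-- The function on rooted triples vanishing on `other` with the given values elsewhere, listed in
the order of the constructors. -/
def tripleFun (c₀ c₁ c₂ c₃ c₄ c₅ c₆ c₇ c₈ c₉ c₁₀ : ℤ) : RootedTriple → ℤ
  | .empty => c₀ | .far => c₁ | .out => c₂ | .inn => c₃ | .outSink => c₄ | .inSource => c₅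
  | .outOut => c₆ | .inIn => c₇ | .outPath => c₈ | .inPath => c₉ | .through => c₁₀ | .other => 0

/-- The weights of the squares in the flag algebra certificate. -/
def squareWeight : Fin 8 → ℤ := ![30, 114, 1, 219, 120, 410, 448, 104]

/-- The linear forms squared in the flag algebra certificate. For a fixed root in the balanced
blow-up of the directed 5-cycle, each of them sums to zero over all `b`, `c`. -/
def squareFun : Fin 8 → RootedTriple → ℤ :=
  ![tripleFun 0 1 (-1) (-1) (-1) (-1) (-2) (-2) (-2) (-2) 9,
    tripleFun 0 4 (-1) (-1) 0 0 (-2) (-2) 1 1 (-2),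
    tripleFun 0 4 0 0 1 1 0 0 (-1) (-1) (-4),
    tripleFun 0 0 0 0 1 1 0 0 (-1) (-1) 0,
    tripleFun 2 4 1 1 (-2) (-2) 0 0 0 0 (-9),
    tripleFun 0 1 0 0 1 1 0 0 (-1) (-1) (-1),
    tripleFun 0 0 0 0 0 0 0 0 1 (-1) 0,
    tripleFun 0 0 3 (-3) 0 0 6 (-6) 2 (-2) 0]

/-- The Gram matrix of the squares, tabulated so that the finite check `sortedBound_ofUpper`
evaluates quickly. -/
def gram : RootedTriple → RootedTriple → ℤ
  | .empty => tripleFun 480 960 240 240 (-480) (-480) 0 0 0 0 (-2160)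
  | .far => tripleFun 960 4200 (-6) (-6) (-576) (-576) (-972) (-972) (-18) (-18) (-5388)
  | .out => tripleFun 240 (-6) 1200 (-672) (-210) (-210) 2160 (-1584) 570 (-678) (-1122)
  | .inn => tripleFun 240 (-6) (-672) 1200 (-210) (-210) (-1584) 2160 (-678) 570 (-1122)
  | .outSink => tripleFun (-480) (-576) (-210) (-210) 1140 1140 60 60 (-570) (-570) 1476
  | .inSource => tripleFun (-480) (-576) (-210) (-210) 1140 1140 60 60 (-570) (-570) 1476
  | .outOut => tripleFun 0 (-972) 2160 (-1584) 60 60 4320 (-3168) 1140 (-1356) (-84)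
  | .inIn => tripleFun 0 (-972) (-1584) 2160 60 60 (-3168) 4320 (-1356) 1140 (-84)
  | .outPath => tripleFun 0 (-18) 570 (-678) (-570) (-570) 1140 (-1356) 1728 0 (-354)
  | .inPath => tripleFun 0 (-18) (-678) 570 (-570) (-570) (-1356) 1140 0 1728 (-354)
  | .through => tripleFun (-2160) (-5388) (-1122) (-1122) 1476 1476 (-84) (-84) (-354) (-354) 13032
  | .other => tripleFun 0 0 0 0 0 0 0 0 0 0 0

theorem gram_eq_sum (s t : RootedTriple) :
    gram s t = ∑ j, squareWeight j * (squareFun j s * squareFun j t) := by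
  cases s <;> cases t <;> rfl

theorem sum_sum_gram_nonneg [Fintype ι] (T : ι → RootedTriple) :
    0 ≤ ∑ i, ∑ i', gram (T i) (T i') := by
  have h_squares : ∑ i, ∑ i', gram (T i) (T i') =
      ∑ j, squareWeight j * (∑ i, squareFun j (T i)) ^ 2 := by
    calc ∑ i, ∑ i', gram (T i) (T i')
        = ∑ i, ∑ j, ∑ i', squareWeight j * (squareFun j (T i) * squareFun j (T i')) := by
          simp only [gram_eq_sum]
          exact Finset.sum_congr rfl fun i _ => Finset.sum_comm
      _ = ∑ j, ∑ i, ∑ i', squareWeight j * (squareFun j (T i) * squareFun j (T i')) :=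
          Finset.sum_comm
      _ = ∑ j, squareWeight j * (∑ i, squareFun j (T i)) ^ 2 := by
          simp only [sq, Finset.sum_mul_sum]
          simp only [Finset.mul_sum]
  have h_weight : ∀ j, 0 ≤ squareWeight j := by decide
  rw [h_squares]
  exact Finset.sum_nonneg fun j _ => mul_nonneg (h_weight j) (sq_nonneg _)

open SignType in
/-- The indicator of an induced `P⃗₄` on `a`, `b`, `c`, `d` in this order. -/
def pathFourIndicator (M : ι → ι → SignType) (a b c d : ι) : ℤ :=
  match M a b, M b c, M c d, M a c, M b d, M a d with
  | pos, pos, pos, zero, zero, zero => 1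
  | _, _, _, _, _, _ => 0

open SignType in
/-- The indicator of an induced `P⃗₃` on `a`, `b`, `c` in this order. -/
def pathThreeIndicator (M : ι → ι → SignType) (a b c : ι) : ℤ :=
  match M a b, M b c, M a c with
  | pos, pos, zero => 1
  | _, _, _ => 0

open SignType in
/-- For an induced `P⃗₃` on `a`, `b`, `c` in this order: `1` if `d` is a twin of `a` on this path,
`-1` if it is a twin of `c`, and `0` otherwise. -/
def twinSign (M : ι → ι → SignType) (a b c d : ι) : ℤ :=
  match M d a, M d b, M d c with
  | zero, pos, zero => 1
  | zero, neg, zero => -1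
  | _, _, _ => 0

/-- The weight of an ordered 5-tuple of vertices in the flag algebra certificate; `0` on lists of
other lengths. Summed over all 5-tuples, the last two terms become sums of squares. -/
def localWeight (M : ι → ι → SignType) : List ι → ℤ
  | [a, b, c, d, e] =>
    60000 * pathFourIndicator M a b c d + gram (rootedTriple M a b c) (rootedTriple M a d e) +
    13776 * (pathThreeIndicator M a b c * (twinSign M a b c d * twinSign M a b c e))
  | _ => 0

theorem localWeight_map {κ : Type*} (M : κ → κ → SignType) (x : ι → κ) (l : List ι) :
    localWeight M (l.map x) = localWeight (fun i j => M (x i) (x j)) l := by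
  rcases l with _ | ⟨a, _ | ⟨b, _ | ⟨c, _ | ⟨d, _ | ⟨e, _ | ⟨f, l⟩⟩⟩⟩⟩⟩ <;> rfl

end LocalWeight

section FiniteCheck

open SignType in
/-- Whether three vertices `a`, `b`, `c` with arc signs `ab`, `bc`, `ac` span a `T⃗₃`. -/
def spansTransitive : SignType → SignType → SignType → Bool
  | zero, _, _ => false
  | _, zero, _ => false
  | _, _, zero => false
  | pos, pos, neg => false
  | neg, neg, pos => false
  | _, _, _ => true

/-- The vector with the given entries; it evaluates faster in the kernel than `![a, b, c, d, e]`. -/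
def vec5 {α : Type*} (a b c d e : α) : Fin 5 → α
  | ⟨0, _⟩ => a | ⟨1, _⟩ => b | ⟨2, _⟩ => c | ⟨3, _⟩ => d | ⟨4, _⟩ => e

/-- The antisymmetric `5 × 5` sign matrix with the given entries above the diagonal. -/
def ofUpper (m₀₁ m₀₂ m₁₂ m₀₃ m₁₃ m₂₃ m₀₄ m₁₄ m₂₄ m₃₄ : SignType) : Fin 5 → Fin 5 → SignType :=
  vec5 (vec5 0 m₀₁ m₀₂ m₀₃ m₀₄) (vec5 (-m₀₁) 0 m₁₂ m₁₃ m₁₄) (vec5 (-m₀₂) (-m₁₂) 0 m₂₃ m₂₄)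
    (vec5 (-m₀₃) (-m₁₃) (-m₂₃) 0 m₃₄) (vec5 (-m₀₄) (-m₁₄) (-m₂₄) (-m₃₄) 0)

/-- The contribution of an arc sign to `degreeCode`. -/
def arcCode : SignType → ℕ
  | .zero => 0 | .pos => 1 | .neg => 5

/-- The outdegree plus five times the indegree of `i`; an isomorphism invariant used to restrict the
finite check to one labelling of each graph (up to ties). -/
def degreeCode (M : Fin 5 → Fin 5 → SignType) (i : Fin 5) : ℕ :=
  arcCode (M i 0) + arcCode (M i 1) + arcCode (M i 2) + arcCode (M i 3) + arcCode (M i 4)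

/-- The inequality of the finite check for graphs labelled by increasing `degreeCode`. The bound is
`5! * 60000 / 125`, where `60000` is the coefficient of the path indicator in `localWeight`. -/
def SortedBound (M : Fin 5 → Fin 5 → SignType) : Prop :=
  degreeCode M 0 ≤ degreeCode M 1 → degreeCode M 1 ≤ degreeCode M 2 →
    degreeCode M 2 ≤ degreeCode M 3 → degreeCode M 3 ≤ degreeCode M 4 →
      ((List.finRange 5).permutations'.map (localWeight M)).sum ≤ 57600

instance (M : Fin 5 → Fin 5 → SignType) : Decidable (SortedBound M) := by
  unfold SortedBound
  infer_instance

/-- Much faster in the kernel than the enumeration through the `Fintype` instance. -/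
instance decidableForallSignType (p : SignType → Prop) [DecidablePred p] : Decidable (∀ s, p s) :=
  decidable_of_iff (p .zero ∧ p .pos ∧ p .neg)
    ⟨fun ⟨h_zero, h_pos, h_neg⟩ s => by cases s <;> assumption, fun h => ⟨h _, h _, h _⟩⟩

/-- Each `T⃗₃` is excluded as soon as its last arc sign is fixed, which prunes the search. -/
theorem sortedBound_ofUpper :
    ∀ m₀₁ m₀₂ m₁₂, spansTransitive m₀₁ m₁₂ m₀₂ = false →
    ∀ m₀₃ m₁₃, spansTransitive m₀₁ m₁₃ m₀₃ = false →
    ∀ m₂₃, spansTransitive m₀₂ m₂₃ m₀₃ = false → spansTransitive m₁₂ m₂₃ m₁₃ = false →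
    ∀ m₀₄ m₁₄, spansTransitive m₀₁ m₁₄ m₀₄ = false →
    ∀ m₂₄, spansTransitive m₀₂ m₂₄ m₀₄ = false → spansTransitive m₁₂ m₂₄ m₁₄ = false →
    ∀ m₃₄, spansTransitive m₀₃ m₃₄ m₀₄ = false → spansTransitive m₁₃ m₃₄ m₁₄ = false →
      spansTransitive m₂₃ m₃₄ m₂₄ = false →
    SortedBound (ofUpper m₀₁ m₀₂ m₁₂ m₀₃ m₁₃ m₂₃ m₀₄ m₁₄ m₂₄ m₃₄) := by
  decide +kernel

end FiniteCheck

section UpperBound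

variable {V : Type*} {A : V → V → Prop}

/-- The arc between `a` and `b` as a sign: `1` for `a → b`, `-1` for `b → a`, and `0` if they are
nonadjacent. -/
noncomputable def arcSign (A : V → V → Prop) (a b : V) : SignType :=
  if A a b then 1 else if A b a then -1 else 0

theorem arcSign_swap (hA : IsOriented A) (a b : V) : arcSign A b a = -arcSign A a b := by
  have := hA a b
  unfold arcSign
  split_ifs <;> first | rfl | contradiction | tauto

theorem arcSign_self (hA : IsOriented A) (a : V) : arcSign A a a = 0 :=
  SignType.self_eq_neg_iff.1 (arcSign_swap hA a a)

theorem spansTransitive_arcSign (hT : T3Free A) (a b c : V) :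
    spansTransitive (arcSign A a b) (arcSign A b c) (arcSign A a c) = false := by
  have h_free : _ ∧ _ ∧ _ ∧ _ ∧ _ ∧ _ :=
    ⟨hT a b c, hT a c b, hT b a c, hT b c a, hT c a b, hT c b a⟩
  unfold arcSign
  split_ifs <;> first | rfl | simp_all

theorem ofUpper_arcSign {A : Fin 5 → Fin 5 → Prop} (hA : IsOriented A) :
    ofUpper (arcSign A 0 1) (arcSign A 0 2) (arcSign A 1 2) (arcSign A 0 3) (arcSign A 1 3)
      (arcSign A 2 3) (arcSign A 0 4) (arcSign A 1 4) (arcSign A 2 4) (arcSign A 3 4) =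
      arcSign A := by
  funext i j
  fin_cases i <;> fin_cases j <;>
    first | rfl | exact (arcSign_self hA _).symm | exact (arcSign_swap hA _ _).symm

theorem degreeCode_eq_sum (M : Fin 5 → Fin 5 → SignType) (i : Fin 5) :
    degreeCode M i = ∑ j, arcCode (M i j) := by
  simp only [degreeCode, Fin.sum_univ_five]

theorem degreeCode_comp (M : Fin 5 → Fin 5 → SignType) (σ : Equiv.Perm (Fin 5)) (i : Fin 5) :
    degreeCode (fun i j => M (σ i) (σ j)) i = degreeCode M (σ i) := by
  simp only [degreeCode_eq_sum]
  exact Equiv.sum_comp σ fun j => arcCode (M (σ i) j)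

theorem sum_perm_localWeight_le_of_monotone {A : Fin 5 → Fin 5 → Prop} (hA : IsOriented A)
    (hT : T3Free A) (h_mono : Monotone (degreeCode (arcSign A))) :
    ∑ σ : Equiv.Perm (Fin 5), localWeight (arcSign A) (List.ofFn σ) ≤ 57600 := by
  have h_bound : SortedBound (arcSign A) := by
    have h_free := spansTransitive_arcSign hT
    rw [← ofUpper_arcSign hA]
    exact sortedBound_ofUpper _ _ _ (h_free 0 1 2) _ _ (h_free 0 1 3) _ (h_free 0 2 3)
      (h_free 1 2 3) _ _ (h_free 0 1 4) _ (h_free 0 2 4) (h_free 1 2 4) _ (h_free 0 3 4)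
      (h_free 1 3 4) (h_free 2 3 4)
  rw [sum_perm_ofFn]
  exact h_bound (h_mono (by decide)) (h_mono (by decide)) (h_mono (by decide)) (h_mono (by decide))

theorem sum_perm_localWeight_le {A : Fin 5 → Fin 5 → Prop} (hA : IsOriented A) (hT : T3Free A) :
    ∑ σ : Equiv.Perm (Fin 5), localWeight (arcSign A) (List.ofFn σ) ≤ 57600 := by
  let τ := Tuple.sort (degreeCode (arcSign A))
  let B : Fin 5 → Fin 5 → Prop := fun i j => A (τ i) (τ j)
  have h_mono : Monotone (degreeCode (arcSign B)) := by
    have h_code : degreeCode (arcSign B) = degreeCode (arcSign A) ∘ τ :=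
      funext (degreeCode_comp (arcSign A) τ)
    exact h_code ▸ Tuple.monotone_sort _
  calc ∑ σ : Equiv.Perm (Fin 5), localWeight (arcSign A) (List.ofFn σ)
      = ∑ σ : Equiv.Perm (Fin 5), localWeight (arcSign A) (List.ofFn (τ * σ)) :=
        (Equiv.sum_comp (Equiv.mulLeft τ) fun σ : Equiv.Perm (Fin 5) =>
          localWeight (arcSign A) (List.ofFn σ)).symm
    _ = ∑ σ : Equiv.Perm (Fin 5), localWeight (arcSign B) (List.ofFn σ) := by
        refine Finset.sum_congr rfl fun σ _ => ?_
        rw [Equiv.Perm.coe_mul, ← List.map_ofFn]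
        exact localWeight_map _ _ _
    _ ≤ 57600 := sum_perm_localWeight_le_of_monotone (hA.comap τ) (hT.comap τ) h_mono

theorem pathFourIndicator_nonneg (M : V → V → SignType) (a b c d : V) :
    0 ≤ pathFourIndicator M a b c d := by
  unfold pathFourIndicator
  split <;> decide

theorem pathFourIndicator_arcSign_eq_one {f : Fin 4 → V}
    (hf : ∀ i j, A (f i) (f j) ↔ (j : ℕ) = (i : ℕ) + 1) :
    pathFourIndicator (arcSign A) (f 0) (f 1) (f 2) (f 3) = 1 := by
  simp [arcSign, hf, pathFourIndicator]

variable [Fintype V]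

theorem sum_localWeight_le (hA : IsOriented A) (hT : T3Free A) :
    ∑ x : Fin 5 → V, localWeight (arcSign A) (List.ofFn x) ≤ 480 * (Fintype.card V : ℤ) ^ 5 := by
  have h_avg := factorial_nsmul_sum_le (fun x : Fin 5 → V => localWeight (arcSign A) (List.ofFn x))
    57600 fun x => by
      simp only [← List.map_ofFn, localWeight_map]
      exact sum_perm_localWeight_le (hA.comap x) (hT.comap x)
  simp only [Fintype.card_fin, nsmul_eq_mul, Nat.cast_pow] at h_avg
  rw [show Nat.factorial 5 = 120 from rfl] at h_avg
  push_cast at h_avg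
  linarith

theorem sum_twin_nonneg (M : V → V → SignType) (a b c : V) :
    0 ≤ ∑ d, ∑ e, pathThreeIndicator M a b c *
      (twinSign M a b c d * twinSign M a b c e) := by
  have h_indicator : 0 ≤ pathThreeIndicator M a b c := by
    unfold pathThreeIndicator
    split <;> decide
  simp only [← Finset.mul_sum, ← Finset.sum_mul]
  exact mul_nonneg h_indicator (mul_self_nonneg _)

theorem card_mul_sum_pathFourIndicator_le (M : V → V → SignType) :
    60000 * (Fintype.card V * ∑ a, ∑ b, ∑ c, ∑ d,
      pathFourIndicator M a b c d) ≤
      ∑ x : Fin 5 → V, localWeight M (List.ofFn x) := by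
  have h_gram : 0 ≤ ∑ a, ∑ b, ∑ c, ∑ d, ∑ e,
      gram (rootedTriple M a b c) (rootedTriple M a d e) :=
    Finset.sum_nonneg fun a _ => by
      simpa only [Fintype.sum_prod_type] using
        sum_sum_gram_nonneg fun p : V × V => rootedTriple M a p.1 p.2
  have h_twin : 0 ≤ ∑ a, ∑ b, ∑ c, ∑ d, ∑ e, pathThreeIndicator M a b c *
      (twinSign M a b c d * twinSign M a b c e) :=
    Finset.sum_nonneg fun a _ => Finset.sum_nonneg fun b _ => Finset.sum_nonneg fun c _ =>
      sum_twin_nonneg M a b c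
  simp only [sum_tuple_succ, List.ofFn_cons, List.ofFn_zero, localWeight, Fintype.sum_unique]
  simp only [Finset.sum_add_distrib, ← Finset.mul_sum, Finset.sum_const, Finset.card_univ,
    nsmul_eq_mul] at h_twin ⊢
  linarith

theorem mul_sum_pathFourIndicator_le (hA : IsOriented A) (hT : T3Free A) :
    125 * ∑ a, ∑ b, ∑ c, ∑ d, pathFourIndicator (arcSign A) a b c d ≤
      (Fintype.card V : ℤ) ^ 4 := by
  rcases isEmpty_or_nonempty V with _ | _
  · simp
  · have h_card : (0 : ℤ) < Fintype.card V := by exact_mod_cast Fintype.card_pos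
    refine le_of_mul_le_mul_left ?_ h_card
    linarith [sum_localWeight_le hA hT, card_mul_sum_pathFourIndicator_le (arcSign A)]

theorem numPaths_le_card_embeddings [DecidableEq V] (A : V → V → Prop) (k : ℕ) :
    numPaths A k ≤
      (Finset.univ.filter fun f : Fin k → V =>
        ∀ i j, A (f i) (f j) ↔ (j : ℕ) = (i : ℕ) + 1).card := by
  refine (Finset.card_le_card fun S hS => ?_).trans
    (Finset.card_image_le (f := fun f : Fin k → V => Finset.univ.image f))
  obtain ⟨f, -, h_range, h_path⟩ := (Finset.mem_filter.1 hS).2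
  exact Finset.mem_image.2 ⟨f, by simpa using h_path, by ext v; simp [h_range]⟩

theorem numPaths_four_le_sum_pathFourIndicator [DecidableEq V] (A : V → V → Prop) :
    (numPaths A 4 : ℤ) ≤ ∑ a, ∑ b, ∑ c, ∑ d, pathFourIndicator (arcSign A) a b c d := by
  let P (f : Fin 4 → V) : ℤ := pathFourIndicator (arcSign A) (f 0) (f 1) (f 2) (f 3)
  let E := Finset.univ.filter fun f : Fin 4 → V => ∀ i j, A (f i) (f j) ↔ (j : ℕ) = (i : ℕ) + 1
  calc (numPaths A 4 : ℤ) ≤ E.card := by exact_mod_cast numPaths_le_card_embeddings A 4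
    _ = ∑ f ∈ E, P f := by
        rw [Finset.cast_card]
        exact Finset.sum_congr rfl fun f hf =>
          (pathFourIndicator_arcSign_eq_one (Finset.mem_filter.1 hf).2).symm
    _ ≤ ∑ f, P f := Finset.sum_le_univ_sum_of_nonneg fun f => pathFourIndicator_nonneg ..
    _ = ∑ a, ∑ b, ∑ c, ∑ d, pathFourIndicator (arcSign A) a b c d := by
        simp only [P, sum_tuple_succ, Fintype.sum_unique]
        rfl

theorem mul_numPaths_four_le [DecidableEq V] (hA : IsOriented A) (hT : T3Free A) :
    125 * numPaths A 4 ≤ Fintype.card V ^ 4 := by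
  zify
  linarith [numPaths_four_le_sum_pathFourIndicator A, mul_sum_pathFourIndicator_le hA hT]

end UpperBound

section BlowupC5

variable {V : Type*} {A : V → V → Prop} {g : V → Fin 5}

theorem _root_.IsBlowupC5.isOriented (hg : IsBlowupC5 A g) : IsOriented A := by
  intro a b h_ab h_ba
  rw [hg] at h_ab h_ba
  grind

theorem _root_.IsBlowupC5.t3Free (hg : IsBlowupC5 A g) : T3Free A := by
  rintro a b c ⟨h_ab, h_bc, h_ac⟩
  rw [hg] at h_ab h_bc h_ac
  grind

theorem _root_.IsBlowupC5.isInducedPath_image [DecidableEq V] (hg : IsBlowupC5 A g) {r : Fin 5}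
    {f : Fin 4 → V} (hf : ∀ j, g (f j) = r + j.castSucc) :
    IsInducedPath A 4 (Finset.univ.image f) := by
  refine ⟨f, fun i j h_eq => ?_, by simp, fun i j => ?_⟩
  · have h_part := congrArg g h_eq
    rw [hf, hf] at h_part
    exact Fin.castSucc_injective 4 (add_left_cancel h_part)
  · rw [hg, hf, hf, add_assoc, add_right_inj]
    revert i j
    decide

/-- The sets of parts met by the paths starting in parts `r` and `s` determine `r` and `s`. -/
theorem eq_of_forall_exists_add_castSucc :
    ∀ r s : Fin 5, (∀ j : Fin 4, ∃ k : Fin 4, s + k.castSucc = r + j.castSucc) → r = s := by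
  decide

theorem exists_injective_forall_mem_part [Fintype V] {m n : ℕ} {g : V → Fin m}
    (hn : ∀ i, n ≤ partSize g i) :
    ∃ p : Fin m → Fin n → V, (∀ i, Function.Injective (p i)) ∧ ∀ i k, g (p i k) = i := by
  have h_emb (i : Fin m) : ∃ q : Fin n → V, Function.Injective q ∧ ∀ k, g (q k) = i := by
    obtain ⟨T, hT, h_card⟩ := Finset.exists_subset_card_eq (hn i)
    refine ⟨fun k => T.equivFinOfCardEq h_card |>.symm k, ?_, fun k => ?_⟩
    · exact Subtype.val_injective.comp (Equiv.injective _)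
    · exact (Finset.mem_filter.1 (hT (Subtype.prop _))).2
  choose p hp using h_emb
  exact ⟨p, fun i => (hp i).1, fun i => (hp i).2⟩

theorem injective_image_of_parts [DecidableEq V] {n : ℕ} {p : Fin 5 → Fin n → V}
    (h_inj : ∀ i, Function.Injective (p i)) (h_part : ∀ i k, g (p i k) = i) :
    Function.Injective fun x : Fin 5 × (Fin 4 → Fin n) =>
      Finset.univ.image fun j => p (x.1 + j.castSucc) (x.2 j) := by
  rintro ⟨r, s⟩ ⟨r', s'⟩ h_eq
  have h_mem (j : Fin 4) :
      ∃ k : Fin 4, p (r' + k.castSucc) (s' k) = p (r + j.castSucc) (s j) := by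
    have h : p (r + j.castSucc) (s j) ∈ Finset.univ.image fun j => p (r + j.castSucc) (s j) :=
      Finset.mem_image_of_mem _ (Finset.mem_univ j)
    rw [show Finset.univ.image _ = Finset.univ.image _ from h_eq] at h
    simpa using h
  obtain rfl : r = r' := by
    refine eq_of_forall_exists_add_castSucc r r' fun j => ?_
    obtain ⟨k, hk⟩ := h_mem j
    exact ⟨k, by simpa only [h_part] using congrArg g hk⟩
  refine Prod.ext rfl (funext fun j => ?_)
  obtain ⟨k, hk⟩ := h_mem j
  obtain rfl : k = j := by simpa [h_part] using congrArg g hk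
  exact (h_inj _ hk).symm

theorem _root_.IsBlowupC5.le_numPaths_four [Fintype V] [DecidableEq V] (hg : IsBlowupC5 A g) {n : ℕ}
    (hn : ∀ i, n ≤ partSize g i) : 5 * n ^ 4 ≤ numPaths A 4 := by
  obtain ⟨p, h_inj, h_part⟩ := exists_injective_forall_mem_part hn
  let paths := Finset.univ.filter fun S : Finset V => IsInducedPath A 4 S
  have h_maps (x : Fin 5 × (Fin 4 → Fin n)) :
      (Finset.univ.image fun j => p (x.1 + j.castSucc) (x.2 j)) ∈ paths :=
    Finset.mem_filter.2 ⟨Finset.mem_univ _, hg.isInducedPath_image fun j => h_part _ _⟩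
  calc 5 * n ^ 4 = Fintype.card (Fin 5 × (Fin 4 → Fin n)) := by simp
    _ ≤ paths.card := Finset.card_le_card_of_injOn _ (fun x _ => h_maps x)
        (injective_image_of_parts h_inj h_part).injOn

theorem div_le_partSize_ofNat (n m : ℕ) [NeZero m] (i : Fin m) :
    n / m ≤ partSize (fun v : Fin n => Fin.ofNat m v) i := by
  have h_lt (k : Fin (n / m)) : m * k + i < n := by
    calc m * k + i < m * (k + 1) := by rw [mul_add_one]; gcongr; exact i.is_lt
      _ ≤ m * (n / m) := by gcongr; exact k.is_lt
      _ ≤ n := Nat.mul_div_le n m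
  have h_card := Finset.card_le_card_of_injOn (s := Finset.univ)
    (t := Finset.univ.filter fun v : Fin n => Fin.ofNat m v = i)
    (fun k : Fin (n / m) => ⟨m * k + i, h_lt k⟩)
    (fun k _ => by simp [Fin.ext_iff, Nat.mod_eq_of_lt])
    (fun k _ l _ h => by simpa [Fin.ext_iff, NeZero.ne] using h)
  simpa [partSize] using h_card

end BlowupC5

section Density

open Filter

variable {V : Type*} [Fintype V] [DecidableEq V] {A : V → V → Prop}

theorem pathDensity_four_le (hA : IsOriented A) (hT : T3Free A) :
    pathDensity A 4 ≤ (Fintype.card V : ℝ) ^ 4 / 125 / (Fintype.card V).choose 4 := by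
  have h_paths : (125 * numPaths A 4 : ℝ) ≤ (Fintype.card V : ℝ) ^ 4 := by
    exact_mod_cast mul_numPaths_four_le hA hT
  unfold pathDensity
  gcongr
  linarith

theorem _root_.IsBlowupC5.le_pathDensity_four {g : V → Fin 5} (hg : IsBlowupC5 A g) {n : ℕ}
    (hn : ∀ i, n ≤ partSize g i) :
    5 * (n : ℝ) ^ 4 / (Fintype.card V).choose 4 ≤ pathDensity A 4 := by
  unfold pathDensity
  gcongr
  exact_mod_cast hg.le_numPaths_four hn

theorem pathDensity_le_maxDensityT3 {n : ℕ} {A : Fin n → Fin n → Prop} (k : ℕ)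
    (hA : IsOriented A) (hT : T3Free A) : pathDensity A k ≤ maxDensityT3 k n := by
  refine le_csSup ?_ ⟨A, hA, hT, rfl⟩
  refine ((Set.finite_range fun B : Fin n → Fin n → Prop => pathDensity B k).subset ?_).bddAbove
  rintro _ ⟨B, -, -, rfl⟩
  exact Set.mem_range_self B

theorem maxDensityT3_four_le (n : ℕ) : maxDensityT3 4 n ≤ (n : ℝ) ^ 4 / 125 / n.choose 4 := by
  refine Real.sSup_le ?_ (by positivity)
  rintro _ ⟨A, hA, hT, rfl⟩
  simpa only [Fintype.card_fin] using pathDensity_four_le hA hT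

theorem le_maxDensityT3_four (n : ℕ) :
    5 * ((n / 5 : ℕ) : ℝ) ^ 4 / n.choose 4 ≤ maxDensityT3 4 n := by
  let g (v : Fin n) : Fin 5 := Fin.ofNat 5 v
  have hg : IsBlowupC5 (fun u v => g v = g u + 1) g := fun _ _ => Iff.rfl
  have h_density := hg.le_pathDensity_four (div_le_partSize_ofNat n 5)
  rw [Fintype.card_fin] at h_density
  exact h_density.trans (pathDensity_le_maxDensityT3 4 hg.isOriented hg.t3Free)

theorem tendsto_pow_div_choose (k : ℕ) :
    Tendsto (fun n : ℕ => (n : ℝ) ^ k / n.choose k) atTop (nhds k.factorial) := by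
  have h_ne : ∀ᶠ n : ℕ in atTop, (n.choose k : ℝ) ≠ 0 :=
    (eventually_ge_atTop k).mono fun n hn => mod_cast (Nat.choose_pos hn).ne'
  have h_ratio := ((Asymptotics.isEquivalent_iff_tendsto_one h_ne).1
    (isEquivalent_choose k).symm).const_mul (k.factorial : ℝ)
  rw [mul_one] at h_ratio
  refine h_ratio.congr fun n => ?_
  rw [Pi.div_apply, ← mul_div_assoc, mul_div_cancel₀]
  exact_mod_cast k.factorial_ne_zero

theorem tendsto_natDiv_div (m : ℕ) :
    Tendsto (fun n : ℕ => ((n / m : ℕ) : ℝ) / n) atTop (nhds (m : ℝ)⁻¹) := by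
  have h_floor := (tendsto_nat_floor_mul_div_atTop (R := ℝ) (inv_nonneg.2 m.cast_nonneg)).comp
    tendsto_natCast_atTop_atTop
  refine h_floor.congr fun n => ?_
  rw [Function.comp_apply, inv_mul_eq_div, Nat.floor_div_natCast, Nat.floor_natCast]

theorem tendsto_natDiv_pow_div_choose (m k : ℕ) :
    Tendsto (fun n : ℕ => ((n / m : ℕ) : ℝ) ^ k / n.choose k) atTop
      (nhds ((m : ℝ)⁻¹ ^ k * k.factorial)) := by
  refine (((tendsto_natDiv_div m).pow k).mul (tendsto_pow_div_choose k)).congr' ?_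
  filter_upwards [eventually_ne_atTop 0] with n hn
  have hn' : (n : ℝ) ≠ 0 := Nat.cast_ne_zero.2 hn
  rw [← mul_div_assoc, ← mul_pow, div_mul_cancel₀ _ hn']

end Density

end PathInducibility

/-- The inducibility of `P⃗₄` in the family of `T⃗₃`-free oriented
graphs equals `24/125`: the maximum density of induced copies of `P⃗₄` over `T⃗₃`-free
oriented graphs on `n` vertices tends to `24/125` as `n → ∞`. -/
theorem inducibility_P4_T3free :
    Filter.Tendsto (fun n : ℕ => maxDensityT3 4 n) Filter.atTop (nhds (24 / 125)) := by
  have h_lower : Filter.Tendsto (fun n : ℕ => 5 * ((n / 5 : ℕ) : ℝ) ^ 4 / n.choose 4)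
      Filter.atTop (nhds (24 / 125)) := by
    convert (PathInducibility.tendsto_natDiv_pow_div_choose 5 4).const_mul 5 using 2
    · rw [mul_div_assoc]
    · norm_num [Nat.factorial]
  have h_upper : Filter.Tendsto (fun n : ℕ => (n : ℝ) ^ 4 / 125 / n.choose 4)
      Filter.atTop (nhds (24 / 125)) := by
    convert (PathInducibility.tendsto_pow_div_choose 4).div_const 125 using 2
    · rw [div_right_comm]
    · norm_num [Nat.factorial]
  exact tendsto_of_tendsto_of_tendsto_of_le_of_le h_lower h_upper
    PathInducibility.le_maxDensityT3_four PathInducibility.maxDensityT3_four_le
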